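/- Let p be a prime and G a finite p-group such that CD(G) is a quasi-antichain of width w ≥ 3 with G ∈ CD(G), and let a be the positive integer with |G/Z(G)| = p^{2a}. Let t be the number of abelian atoms of CD(G) and s = w − t the number of nonabelian atoms. If t ≥ 2 and s ≥ 2, then: if p = 2 then 3 ≤ t and t ≤ s + 1; and if p is odd then 2·(t − 1) ≤ s. -/

import Mathlib

/-- The Chermak-Delgado measure of a subgroup `H` of a finite group `G`:
`m_G(H) = |H| · |C_G(H)|`. -/
noncomputable def CDmeasure {G : Type*} [Group G] (H : Subgroup G) : ℕ :=
  Nat.card H * Nat.card (Subgroup.centralizer (H : Set G))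

/-- `H` belongs to the Chermak-Delgado lattice of `G`: its measure is maximal. -/
def inCD {G : Type*} [Group G] (H : Subgroup G) : Prop :=
  ∀ K : Subgroup G, CDmeasure K ≤ CDmeasure H

/-- `CD(G)` is a quasi-antichain of width `w` with `G ∈ CD(G)`. -/
def IsQACD (G : Type*) [Group G] (w : ℕ) : Prop :=
  inCD (⊤ : Subgroup G) ∧ inCD (Subgroup.center G) ∧
  (∀ K : Subgroup G, inCD K → Subgroup.center G ≤ K) ∧
  (∀ K K' : Subgroup G, inCD K → inCD K' →
    Subgroup.center G < K → K ≤ K' → K' < ⊤ → K = K') ∧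
  {K : Subgroup G | inCD K ∧ Subgroup.center G < K ∧ K < ⊤}.ncard = w

/-- The set of abelian atoms of the quasi-antichain `CD(G)`. -/
def abelianAtoms (G : Type*) [Group G] : Set (Subgroup G) :=
  {K : Subgroup G | inCD K ∧ Subgroup.center G < K ∧ K < ⊤ ∧ ∀ x y : K, x * y = y * x}

/-! Any two distinct atoms `K`, `L` satisfy `K ∩ L = Z(G)` and `K L = G`, and all atoms are normal.
Two abelian atoms `A ≠ B` are therefore self-centralizing and make `G` of class two, so the
commutator is a bimultiplicative pairing into `Z(G)` that vanishes on `A` and on `B`, and the atoms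
other than `B` are the graphs of the bimultiplicative forms `F` on `A` whose partial maps are
commutator characters. Taking the centralizer of a graph transposes the form, so the abelian atoms
other than `B` correspond to the symmetric forms. Hence `w - 1` is the order of a `p`-group, `t - 1`
is the order of a subgroup, proper because some atom is nonabelian, and Lagrange's theorem gives
`p (t - 1) ≤ w - 1`. Moreover `t - 1 ≡ w - 1` modulo `2`, because transposition is an involution
whose fixed points are the symmetric forms. -/

open Subgroup
open scoped Pointwise IsMulCommutative commutatorElement

section Counting

theorem card_image_mk_eq_relIndex {G : Type*} [Group G] (H K : Subgroup G) :
    Nat.card ((QuotientGroup.mk : G → G ⧸ K) '' H) = K.relIndex H := by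
  have himage : (QuotientGroup.mk : G → G ⧸ K) '' H = MulAction.orbit H ((1 : G) : G ⧸ K) := by
    rw [Set.image_eq_range]
    exact congrArg Set.range (funext fun h => congrArg QuotientGroup.mk (mul_one (h : G)).symm)
  have hstabilizer : MulAction.stabilizer H ((1 : G) : G ⧸ K) = K.subgroupOf H := by
    conv_rhs => rw [← MulAction.stabilizer_quotient K]
    rfl
  rw [himage, Nat.card_coe_set_eq, ← MulAction.index_stabilizer, hstabilizer, relIndex]

theorem card_mul_mul_card_inf {G : Type*} [Group G] (H K : Subgroup G) :
    Nat.card (H * K : Set G) * Nat.card ↥(H ⊓ K) = Nat.card H * Nat.card K := by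
  have hH : Nat.card ↥(H ⊓ K) * K.relIndex H = Nat.card H := by
    simpa only [relIndex_bot_left, inf_relIndex_left] using
      relIndex_mul_relIndex ⊥ (H ⊓ K) H bot_le inf_le_left
  rw [card_mul_eq_card_subgroup_mul_card_quotient, card_image_mk_eq_relIndex, ← hH]
  ring

theorem card_mul_card_le_card_sup_mul_card_inf {G : Type*} [Group G] [Finite G]
    (H K : Subgroup G) :
    Nat.card H * Nat.card K ≤ Nat.card ↥(H ⊔ K) * Nat.card ↥(H ⊓ K) := by
  rw [← card_mul_mul_card_inf]
  exact Nat.mul_le_mul_right _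
    (Nat.card_mono (Set.toFinite _)
      (Set.mul_subset_iff.mpr fun _ hx _ hy => mul_mem_sup hx hy))

theorem card_mul_card_of_sup_eq_top {G : Type*} [Group G] {H K : Subgroup G} [K.Normal]
    (hHK : H ⊔ K = ⊤) : Nat.card H * Nat.card K = Nat.card G * Nat.card ↥(H ⊓ K) := by
  rw [← card_mul_mul_card_inf, ← mul_normal, hHK, coe_top, Nat.card_univ]

theorem mul_card_le_card_of_isPGroup_of_ne_top {G : Type*} [Group G] [Finite G] {p : ℕ}
    [Fact p.Prime] (hG : IsPGroup p G) {H : Subgroup G} (hH : H ≠ ⊤) :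
    p * Nat.card H ≤ Nat.card G := by
  obtain ⟨n, hn⟩ := hG.index H
  have hn0 : n ≠ 0 := by
    rintro rfl
    exact hH (index_eq_one.mp (by rwa [pow_zero] at hn))
  rw [← H.index_mul_card, hn]
  exact Nat.mul_le_mul_right _ (Nat.le_self_pow hn0 p)

theorem card_fixed_modEq_card {α : Type*} [Finite α] {f : α → α} (hf : Function.Involutive f) :
    Nat.card {x // f x = x} ≡ Nat.card α [MOD 2] := by
  classical
  have := Fintype.ofFinite α
  rw [Nat.card_eq_fintype_card, Nat.card_eq_fintype_card]
  exact (Equiv.Perm.card_fixedPoints_modEq (f := (f : Function.End α)) (p := 2) (n := 1)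
    (funext hf)).symm

end Counting

section ChermakDelgado

variable {G : Type*} [Group G]

theorem centralizer_map_mulEquiv {H : Type*} [Group H] (e : G ≃* H) (K : Subgroup G) :
    centralizer (e.mapSubgroup K : Set H) = e.mapSubgroup (centralizer K) := by
  refine le_antisymm (fun x hx => ⟨e.symm x, ?_, e.apply_symm_apply x⟩)
    (map_centralizer_le_centralizer_image _ _)
  refine mem_centralizer_iff.mpr fun k hk => e.injective ?_
  simpa using mem_centralizer_iff.mp hx (e k) (mem_map_of_mem _ hk)

theorem CDmeasure_map_mulEquiv {H : Type*} [Group H] (e : G ≃* H) (K : Subgroup G) :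
    CDmeasure (e.mapSubgroup K) = CDmeasure K := by
  rw [CDmeasure, centralizer_map_mulEquiv, card_mapSubgroup, card_mapSubgroup, CDmeasure]

theorem inCD.map_mulEquiv {H : Type*} [Group H] (e : G ≃* H) {K : Subgroup G} (hK : inCD K) :
    inCD (e.mapSubgroup K) := by
  refine e.mapSubgroup.surjective.forall.mpr fun L => ?_
  simpa only [CDmeasure_map_mulEquiv] using hK L

theorem centralizer_sup (H K : Subgroup G) :
    centralizer (↑(H ⊔ K) : Set G) = centralizer H ⊓ centralizer K := by
  refine le_antisymm (le_inf (centralizer_le (SetLike.coe_mono le_sup_left))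
    (centralizer_le (SetLike.coe_mono le_sup_right))) ?_
  exact le_centralizer_iff.mp (sup_le (le_centralizer_iff.mp inf_le_left)
    (le_centralizer_iff.mp inf_le_right))

theorem centralizer_sup_centralizer_le (H K : Subgroup G) :
    centralizer (H : Set G) ⊔ centralizer K ≤ centralizer (↑(H ⊓ K) : Set G) :=
  sup_le (centralizer_le (SetLike.coe_mono inf_le_left))
    (centralizer_le (SetLike.coe_mono inf_le_right))

variable {H K : Subgroup G}

theorem inCD.CDmeasure_eq (hH : inCD H) (hK : inCD K) : CDmeasure H = CDmeasure K :=
  le_antisymm (hK H) (hH K)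

variable [Finite G]

theorem CDmeasure_pos (K : Subgroup G) : 0 < CDmeasure K :=
  Nat.mul_pos Nat.card_pos Nat.card_pos

theorem inCD.centralizer (hK : inCD K) : inCD (centralizer (K : Set G)) := fun L =>
  (hK L).trans <| by
    rw [CDmeasure, CDmeasure, mul_comm]
    exact Nat.mul_le_mul_left _ (card_le_of_le (le_centralizer_iff.mp le_rfl))

theorem inCD.centralizer_centralizer (hK : inCD K) :
    Subgroup.centralizer (Subgroup.centralizer (K : Set G) : Set G) = K := by
  refine (eq_of_le_of_card_ge (le_centralizer_iff.mp le_rfl) ?_).symm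
  have hmeasure := hK.centralizer.CDmeasure_eq hK
  rw [CDmeasure, CDmeasure, mul_comm] at hmeasure
  exact (Nat.eq_of_mul_eq_mul_right Nat.card_pos hmeasure).le

theorem card_centralizer_mul_card_centralizer_le (H K : Subgroup G) :
    Nat.card (centralizer (H : Set G)) * Nat.card (centralizer (K : Set G)) ≤
      Nat.card (centralizer (↑(H ⊔ K) : Set G)) * Nat.card (centralizer (↑(H ⊓ K) : Set G)) := by
  rw [centralizer_sup, mul_comm (Nat.card ↥(centralizer (H : Set G) ⊓ centralizer K))]
  exact (card_mul_card_le_card_sup_mul_card_inf _ _).trans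
    (Nat.mul_le_mul_right _ (card_le_of_le (centralizer_sup_centralizer_le H K)))

theorem CDmeasure_mul_CDmeasure_le (H K : Subgroup G) :
    CDmeasure H * CDmeasure K ≤ CDmeasure (H ⊔ K) * CDmeasure (H ⊓ K) := by
  simp only [CDmeasure]
  rw [mul_mul_mul_comm, mul_mul_mul_comm (Nat.card ↥(H ⊔ K))]
  exact Nat.mul_le_mul (card_mul_card_le_card_sup_mul_card_inf H K)
    (card_centralizer_mul_card_centralizer_le H K)

theorem inCD.sup (hH : inCD H) (hK : inCD K) : inCD (H ⊔ K) := fun L =>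
  (hH L).trans <| Nat.le_of_mul_le_mul_right
    ((CDmeasure_mul_CDmeasure_le H K).trans (Nat.mul_le_mul_left _ (hK (H ⊓ K))))
    (CDmeasure_pos K)

theorem inCD.inf (hH : inCD H) (hK : inCD K) : inCD (H ⊓ K) := fun L =>
  (hK L).trans <| Nat.le_of_mul_le_mul_left
    ((CDmeasure_mul_CDmeasure_le H K).trans (Nat.mul_le_mul_right _ (hH (H ⊔ K))))
    (CDmeasure_pos H)

theorem inCD.card_mul_card (hH : inCD H) (hK : inCD K) :
    Nat.card H * Nat.card K = Nat.card ↥(H ⊔ K) * Nat.card ↥(H ⊓ K) := by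
  refine le_antisymm (card_mul_card_le_card_sup_mul_card_inf H K) ?_
  have hmeasure : CDmeasure H * CDmeasure K = CDmeasure (H ⊔ K) * CDmeasure (H ⊓ K) := by
    rw [hH.CDmeasure_eq (hH.sup hK), hK.CDmeasure_eq (hH.inf hK)]
  simp only [CDmeasure] at hmeasure
  rw [mul_mul_mul_comm, mul_mul_mul_comm (Nat.card ↥(H ⊔ K))] at hmeasure
  exact Nat.le_of_mul_le_mul_right (hmeasure.symm.trans_le
    (Nat.mul_le_mul_left _ (card_centralizer_mul_card_centralizer_le H K)))
    (Nat.mul_pos Nat.card_pos Nat.card_pos)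

theorem inCD.mul_eq_sup (hH : inCD H) (hK : inCD K) : (H * K : Set G) = ↑(H ⊔ K) := by
  refine Set.eq_of_subset_of_ncard_le
    (Set.mul_subset_iff.mpr fun _ hx _ hy => mul_mem_sup hx hy) (le_of_eq ?_)
  refine Nat.eq_of_mul_eq_mul_right (Nat.card_pos (α := ↥(H ⊓ K))) ?_
  exact (hH.card_mul_card hK).symm.trans (card_mul_mul_card_inf H K).symm

end ChermakDelgado

section Atoms

variable {G : Type*} [Group G]

/-- The atoms of `CD(G)` when it is a quasi-antichain with top `G` and bottom `Z(G)`; `IsQACD`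
counts the elements of this set. -/
def cdAtoms (G : Type*) [Group G] : Set (Subgroup G) :=
  {K | inCD K ∧ center G < K ∧ K < ⊤}

theorem abelianAtoms_eq_inter :
    abelianAtoms G = cdAtoms G ∩ {K | K ≤ centralizer (K : Set G)} := by
  ext K
  have hcomm : K ≤ centralizer (K : Set G) ↔ ∀ x y : K, x * y = y * x := by
    rw [le_centralizer_iff_isMulCommutative, isMulCommutative_iff]
  simp only [abelianAtoms, cdAtoms, Set.mem_inter_iff, Set.mem_ofPred_eq, hcomm, and_assoc]

theorem map_mulEquiv_mem_cdAtoms (e : G ≃* G) {K : Subgroup G} (hK : K ∈ cdAtoms G) :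
    e.mapSubgroup K ∈ cdAtoms G := by
  refine ⟨hK.1.map_mulEquiv e, ?_, ?_⟩
  · have hcenter : e.mapSubgroup (center G) = center G :=
      characteristic_iff_map_eq.mp centerCharacteristic e
    simpa only [hcenter] using e.mapSubgroup.lt_iff_lt.mpr hK.2.1
  · simpa only [map_top] using e.mapSubgroup.lt_iff_lt.mpr hK.2.2

theorem centralizer_mem_cdAtoms [Finite G] {K : Subgroup G} (hK : K ∈ cdAtoms G) :
    centralizer (K : Set G) ∈ cdAtoms G := by
  refine ⟨hK.1.centralizer, (center_le_centralizer _).lt_of_ne fun h => ?_,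
    lt_top_iff_ne_top.mpr fun h => ?_⟩
  · refine hK.2.2.ne ?_
    rw [← hK.1.centralizer_centralizer, ← h, centralizer_eq_top_iff_subset]
  · exact hK.2.1.not_ge (centralizer_eq_top_iff_subset.mp h)

namespace IsQACD

variable {w : ℕ} {K L : Subgroup G}

theorem ncard_cdAtoms (hG : IsQACD G w) : (cdAtoms G).ncard = w :=
  hG.2.2.2.2

theorem eq_of_le (hG : IsQACD G w) (hK : K ∈ cdAtoms G) (hL : L ∈ cdAtoms G) (hKL : K ≤ L) :
    K = L :=
  hG.2.2.2.1 K L hK.1 hL.1 hK.2.1 hKL hL.2.2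

variable [Finite G]

theorem inf_eq_center (hG : IsQACD G w) (hK : K ∈ cdAtoms G) (hL : L ∈ cdAtoms G) (hKL : K ≠ L) :
    K ⊓ L = center G := by
  by_contra hne
  have hinf : K ⊓ L ∈ cdAtoms G :=
    ⟨hK.1.inf hL.1, (le_inf hK.2.1.le hL.2.1.le).lt_of_ne' hne, inf_le_left.trans_lt hK.2.2⟩
  exact hKL ((hG.eq_of_le hinf hK inf_le_left).symm.trans (hG.eq_of_le hinf hL inf_le_right))

theorem sup_eq_top (hG : IsQACD G w) (hK : K ∈ cdAtoms G) (hL : L ∈ cdAtoms G) (hKL : K ≠ L) :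
    K ⊔ L = ⊤ := by
  by_contra hne
  have hsup : K ⊔ L ∈ cdAtoms G :=
    ⟨hK.1.sup hL.1, hK.2.1.trans_le le_sup_left, lt_top_iff_ne_top.mpr hne⟩
  exact hKL ((hG.eq_of_le hK hsup le_sup_left).trans (hG.eq_of_le hL hsup le_sup_right).symm)

/-- A subgroup and a different conjugate never multiply to the whole group, whereas any two distinct
atoms do. -/
theorem normal_of_mem_cdAtoms (hG : IsQACD G w) (hK : K ∈ cdAtoms G) : K.Normal := by
  refine normal_iff_map_conj_eq.mpr fun g => ?_
  have hKg : (MulAut.conj g).mapSubgroup K ∈ cdAtoms G := map_mulEquiv_mem_cdAtoms _ hK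
  by_contra hne
  have hprod : (K * (MulAut.conj g).mapSubgroup K : Set G) = Set.univ := by
    rw [hK.1.mul_eq_sup hKg.1, hG.sup_eq_top hK hKg (Ne.symm hne), coe_top]
  obtain ⟨k, hk, _, ⟨l, hl, rfl⟩, hkl : k * (g * l * g⁻¹) = g⁻¹⟩ :=
    hprod.symm ▸ Set.mem_univ g⁻¹
  have hkgl : k * (g * l) = 1 := by
    simpa only [← mul_assoc, mul_eq_right] using hkl
  have hg : g ∈ K := by
    rw [eq_mul_inv_of_mul_eq (eq_inv_of_mul_eq_one_right hkgl)]
    exact mul_mem (inv_mem hk) (inv_mem hl)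
  exact hne (mem_normalizer_iff_map_conj_eq.mp (le_normalizer hg))

theorem centralizer_eq_self (hG : IsQACD G w) (hK : K ∈ cdAtoms G)
    (hcomm : K ≤ centralizer (K : Set G)) : centralizer (K : Set G) = K :=
  (hG.eq_of_le hK (centralizer_mem_cdAtoms hK) hcomm).symm

end IsQACD

end Atoms

section CommutatorPairing

variable {G : Type*} [Group G]

theorem commutatorElement_mul_left_of_mem_center {g h k : G} (hc : ⁅h, k⁆ ∈ center G) :
    ⁅g * h, k⁆ = ⁅g, k⁆ * ⁅h, k⁆ := by
  rw [commutatorElement_mul_left_eq_conj_mul, mem_center_iff.mp hc g, mul_inv_cancel_right,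
    ← mem_center_iff.mp hc]

theorem commutatorElement_mul_right_of_mem_center {g h k : G} (hc : ⁅g, k⁆ ∈ center G) :
    ⁅g, h * k⁆ = ⁅g, h⁆ * ⁅g, k⁆ := by
  rw [commutatorElement_mul_right_eq_mul_conj, mul_assoc, mul_assoc, ← mul_assoc h,
    mem_center_iff.mp hc h, mul_inv_cancel_right]

/-- In a group of nilpotency class at most two, the commutator `⁅g, h⁆` as a bimultiplicative
pairing with values in the centre. -/
def commutatorPairing (hG : commutator G ≤ center G) : G →* G →* center G :=
  have hcentral (g h : G) : ⁅g, h⁆ ∈ center G :=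
    hG (commutator_mem_commutator (mem_top g) (mem_top h))
  MonoidHom.mk'
    (fun g => MonoidHom.mk' (fun h => ⟨⁅g, h⁆, hcentral g h⟩) fun _ k =>
      Subtype.ext (commutatorElement_mul_right_of_mem_center (hcentral g k)))
    fun _ h => MonoidHom.ext fun k =>
      Subtype.ext (commutatorElement_mul_left_of_mem_center (hcentral h k))

variable (hG : commutator G ≤ center G)

@[simp]
theorem coe_commutatorPairing (g h : G) : (commutatorPairing hG g h : G) = ⁅g, h⁆ :=
  rfl

theorem commutatorPairing_inv (g h : G) :
    (commutatorPairing hG g h)⁻¹ = commutatorPairing hG h g :=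
  Subtype.ext (commutatorElement_inv g h)

theorem commutatorPairing_eq_one_iff {g h : G} : commutatorPairing hG g h = 1 ↔ g * h = h * g := by
  rw [← Subtype.coe_inj, coe_commutatorPairing, OneMemClass.coe_one,
    commutatorElement_eq_one_iff_mul_comm]

end CommutatorPairing

theorem exists_mem_mk_eq_of_sup_eq_top {G : Type*} [Group G] {K B : Subgroup G} [B.Normal]
    (hKB : K ⊔ B = ⊤) (g : G) : ∃ k ∈ K, (k : G ⧸ B) = g := by
  obtain ⟨k, hk, b, hb, rfl⟩ := mem_sup_of_normal_right.mp (hKB ▸ mem_top g)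
  exact ⟨k, hk, QuotientGroup.eq.mpr (by rwa [inv_mul_cancel_left])⟩

theorem inf_eq_center_of_centralizer_eq {G : Type*} [Group G] {A B : Subgroup G}
    (hA : centralizer (A : Set G) = A)
    (hB : centralizer (B : Set G) = B) (hAB : A ⊔ B = ⊤) :
    A ⊓ B = center G := by
  conv_lhs => rw [← hA, ← hB]
  rw [← centralizer_sup, hAB, coe_top, centralizer_univ]

/-- Two self-centralizing (hence maximal abelian) subgroups that generate a group of nilpotency
class at most two. Like a pair of complementary Lagrangian subspaces for the commutator pairing on
`G ⧸ Z(G)`, they let complements of `B` modulo `Z(G)` be read as graphs over `A`. -/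
structure IsPolarization {G : Type*} [Group G] (A B : Subgroup G) : Prop where
  commutator_le_center : commutator G ≤ center G
  centralizer_left : centralizer (A : Set G) = A
  centralizer_right : centralizer (B : Set G) = B
  sup_eq_top : A ⊔ B = ⊤

namespace IsPolarization

variable {G : Type*} [Group G] {A B : Subgroup G}

theorem of_normal [A.Normal] [B.Normal] (hA : centralizer (A : Set G) = A)
    (hB : centralizer (B : Set G) = B) (hAB : A ⊔ B = ⊤) : IsPolarization A B where
  commutator_le_center := by
    have hAcomm : IsMulCommutative A := le_centralizer_iff_isMulCommutative.mp hA.ge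
    have hBcomm : IsMulCommutative B := le_centralizer_iff_isMulCommutative.mp hB.ge
    rw [← inf_eq_center_of_centralizer_eq hA hB hAB]
    exact le_inf (Normal.commutator_le_of_self_sup_commutative_eq_top hAB hBcomm)
      (Normal.commutator_le_of_self_sup_commutative_eq_top (sup_comm A B ▸ hAB) hAcomm)
  centralizer_left := hA
  centralizer_right := hB
  sup_eq_top := hAB

theorem inf_eq_center (h : IsPolarization A B) : A ⊓ B = center G :=
  inf_eq_center_of_centralizer_eq h.centralizer_left h.centralizer_right h.sup_eq_top

theorem normal_right (h : IsPolarization A B) : B.Normal :=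
  Normal.of_commutator_le G <| h.commutator_le_center.trans <| h.inf_eq_center ▸ inf_le_right

theorem exists_mk_eq (h : IsPolarization A B) (g : G) : ∃ x : A, ((x : G) : G ⧸ B) = g := by
  have := h.normal_right
  obtain ⟨x, hx, hxg⟩ := exists_mem_mk_eq_of_sup_eq_top h.sup_eq_top g
  exact ⟨⟨x, hx⟩, hxg⟩

variable (h : IsPolarization A B)

/-- The character `⁅g, ·⁆` of `A` defined by an element `g`. -/
def character : G →* A →* center G :=
  (MonoidHom.compHom' A.subtype).comp (commutatorPairing h.commutator_le_center)

theorem character_apply (g : G) (a : A) :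
    h.character g a = commutatorPairing h.commutator_le_center g a :=
  rfl

theorem character_eq_one_iff {g : G} : h.character g = 1 ↔ g ∈ A := by
  conv_rhs => rw [← h.centralizer_left, mem_centralizer_iff]
  simp only [MonoidHom.ext_iff, Subtype.forall, character_apply, MonoidHom.one_apply,
    commutatorPairing_eq_one_iff, SetLike.mem_coe, eq_comm (a := g * _)]

theorem character_eq_iff {g k : G} : h.character g = h.character k ↔ g⁻¹ * k ∈ A := by
  rw [← h.character_eq_one_iff, map_mul, map_inv, inv_mul_eq_one]

theorem commutatorPairing_eq {g k : G} {x y : A} (hx : ((x : G) : G ⧸ B) = g)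
    (hy : ((y : G) : G ⧸ B) = k) :
    commutatorPairing h.commutator_le_center g k = h.character g y * (h.character k x)⁻¹ := by
  obtain ⟨b, hb, rfl⟩ : ∃ b ∈ B, x * b = g := ⟨_, QuotientGroup.eq.mp hx, mul_inv_cancel_left _ _⟩
  obtain ⟨c, hc, rfl⟩ : ∃ c ∈ B, y * c = k := ⟨_, QuotientGroup.eq.mp hy, mul_inv_cancel_left _ _⟩
  have hA : commutatorPairing h.commutator_le_center x y = 1 :=
    DFunLike.congr_fun (h.character_eq_one_iff.mpr x.2) y
  have hB : commutatorPairing h.commutator_le_center b c = 1 :=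
    (commutatorPairing_eq_one_iff _).mpr
      (mem_centralizer_iff.mp (h.centralizer_right.ge hc) b hb)
  rw [character_apply, character_apply, commutatorPairing_inv]
  simp only [map_mul, MonoidHom.mul_apply, hA, hB, one_mul, mul_one]

/-- The bimultiplicative forms `F` on `A` such that all `F a` and all `F · a` are characters of `A`
defined by elements of the group. Such a form descends to `A ⧸ Z(G)`. -/
def forms : Subgroup (A →* A →* center G) where
  carrier := {F | ∀ a, F a ∈ h.character.range ∧ F.flip a ∈ h.character.range}
  one_mem' _ := ⟨one_mem _, one_mem _⟩
  mul_mem' hF hF' a := ⟨mul_mem (hF a).1 (hF' a).1, mul_mem (hF a).2 (hF' a).2⟩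
  inv_mem' hF a := ⟨inv_mem (hF a).1, inv_mem (hF a).2⟩

variable {h}

theorem eq_of_mk_eq {F : A →* A →* center G} (hF : F ∈ h.forms) {x y : A}
    (hxy : ((x : G) : G ⧸ B) = y) : F x = F y := by
  have hcenter : (x : G)⁻¹ * y ∈ center G :=
    h.inf_eq_center ▸ mem_inf.mpr ⟨mul_mem (inv_mem x.2) y.2, QuotientGroup.eq.mp hxy⟩
  rw [← inv_mul_eq_one, ← map_inv, ← map_mul]
  refine MonoidHom.ext fun a => ?_
  obtain ⟨g, hg⟩ := (hF a).2
  calc F (x⁻¹ * y) a = h.character g (x⁻¹ * y) := (DFunLike.congr_fun hg (x⁻¹ * y)).symm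
    _ = 1 := (commutatorPairing_eq_one_iff h.commutator_le_center).mpr
      (mem_center_iff.mp hcenter g)

variable (h) in
/-- The graph of `F`: over `x : A`, viewed modulo `B`, lie the elements defining the character
`F x`. -/
def graph (F : A →* A →* center G) : Subgroup G :=
  have := h.normal_right
  { carrier := {g | ∃ x : A, ((x : G) : G ⧸ B) = g ∧ F x = h.character g}
    one_mem' := ⟨1, rfl, by rw [map_one, map_one]⟩
    mul_mem' := by
      rintro g k ⟨x, hx, hFx⟩ ⟨y, hy, hFy⟩
      refine ⟨x * y, ?_, by rw [map_mul, map_mul, hFx, hFy]⟩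
      rw [coe_mul, QuotientGroup.mk_mul, QuotientGroup.mk_mul, hx, hy]
    inv_mem' := by
      rintro g ⟨x, hx, hFx⟩
      refine ⟨x⁻¹, ?_, by rw [map_inv, map_inv, hFx]⟩
      rw [coe_inv, QuotientGroup.mk_inv, QuotientGroup.mk_inv, hx] }

theorem mem_graph_iff {F : A →* A →* center G} (hF : F ∈ h.forms) {g : G} {x : A}
    (hx : ((x : G) : G ⧸ B) = g) : g ∈ h.graph F ↔ F x = h.character g := by
  refine ⟨?_, fun hFx => ⟨x, hx, hFx⟩⟩
  rintro ⟨y, hy, hFy⟩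
  exact (eq_of_mk_eq hF (hx.trans hy.symm)).trans hFy

theorem exists_mem_graph {F : A →* A →* center G} (hF : F ∈ h.forms) (x : A) :
    ∃ g ∈ h.graph F, ((x : G) : G ⧸ B) = g := by
  have := h.normal_right
  obtain ⟨g, hg⟩ := (hF x).1
  obtain ⟨a, ha⟩ := h.exists_mk_eq g
  have hx : ((x : G) : G ⧸ B) = ↑(x * ((a : G)⁻¹ * g)) := by
    rw [QuotientGroup.mk_mul, QuotientGroup.mk_mul, QuotientGroup.mk_inv, ha, inv_mul_cancel,
      mul_one]
  refine ⟨_, (mem_graph_iff hF hx).mpr ?_, hx⟩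
  rw [map_mul, map_mul, map_inv, h.character_eq_one_iff.mpr x.2, h.character_eq_one_iff.mpr a.2, hg,
    inv_one, one_mul, one_mul]

theorem graph_inf_eq_center {F : A →* A →* center G} (hF : F ∈ h.forms) :
    h.graph F ⊓ B = center G := by
  rw [← h.inf_eq_center]
  ext g
  rw [mem_inf, mem_inf, and_congr_left_iff]
  intro hg
  have hone : (((1 : A) : G) : G ⧸ B) = g :=
    QuotientGroup.eq.mpr (by rwa [coe_one, inv_one, one_mul])
  rw [mem_graph_iff hF hone, map_one, eq_comm, h.character_eq_one_iff]

theorem graph_sup_eq_top {F : A →* A →* center G} (hF : F ∈ h.forms) : h.graph F ⊔ B = ⊤ := by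
  refine eq_top_iff.mpr fun g _ => ?_
  obtain ⟨x, hx⟩ := h.exists_mk_eq g
  obtain ⟨k, hk, hxk⟩ := exists_mem_graph hF x
  rw [← mul_inv_cancel_left k g]
  exact mul_mem_sup hk (QuotientGroup.eq.mp (hxk.symm.trans hx))

theorem eq_of_graph_le {F F' : A →* A →* center G} (hF : F ∈ h.forms) (hF' : F' ∈ h.forms)
    (hle : h.graph F ≤ h.graph F') : F = F' := by
  ext x : 1
  obtain ⟨g, hg, hx⟩ := exists_mem_graph hF x
  rw [(mem_graph_iff hF hx).mp hg, (mem_graph_iff hF' hx).mp (hle hg)]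

theorem flip_mem_forms {F : A →* A →* center G} (hF : F ∈ h.forms) : F.flip ∈ h.forms :=
  fun a => (hF a).symm

theorem centralizer_graph {F : A →* A →* center G} (hF : F ∈ h.forms) :
    centralizer (h.graph F : Set G) = h.graph F.flip := by
  ext k
  obtain ⟨y, hy⟩ := h.exists_mk_eq k
  have hcomm {g : G} (hg : g ∈ h.graph F) {x : A} (hx : ((x : G) : G ⧸ B) = g) :
      g * k = k * g ↔ F x y = h.character k x := by
    rw [← commutatorPairing_eq_one_iff h.commutator_le_center, h.commutatorPairing_eq hx hy,
      mul_inv_eq_one, (mem_graph_iff hF hx).mp hg]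
  rw [mem_centralizer_iff, mem_graph_iff (flip_mem_forms hF) hy]
  refine ⟨fun hk => MonoidHom.ext fun x => ?_, ?_⟩
  · obtain ⟨g, hg, hx⟩ := exists_mem_graph hF x
    exact (hcomm hg hx).mp (hk g hg)
  · rintro hk g hg
    obtain ⟨x, hx⟩ := h.exists_mk_eq g
    exact (hcomm hg hx).mpr (DFunLike.congr_fun hk x)

theorem graph_le_centralizer_iff {F : A →* A →* center G} (hF : F ∈ h.forms) :
    h.graph F ≤ centralizer (h.graph F : Set G) ↔ F.flip = F := by
  rw [centralizer_graph hF]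
  exact ⟨fun hle => (eq_of_graph_le hF (flip_mem_forms hF) hle).symm,
    fun hflip => hflip.symm ▸ le_rfl⟩

theorem card_graph [Finite G] {F : A →* A →* center G} (hF : F ∈ h.forms) :
    Nat.card (h.graph F) = Nat.card A := by
  have := h.normal_right
  refine Nat.eq_of_mul_eq_mul_right (Nat.card_pos (α := B)) ?_
  rw [card_mul_card_of_sup_eq_top (graph_sup_eq_top hF), card_mul_card_of_sup_eq_top h.sup_eq_top,
    graph_inf_eq_center hF, h.inf_eq_center]

theorem graph_mem_cdAtoms [Finite G] (hA : inCD A) (hB : B ∈ cdAtoms G) {F : A →* A →* center G}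
    (hF : F ∈ h.forms) : h.graph F ∈ cdAtoms G := by
  have hmeasure : CDmeasure (h.graph F) = CDmeasure A := by
    rw [CDmeasure, CDmeasure, centralizer_graph hF, card_graph hF, card_graph (flip_mem_forms hF),
      h.centralizer_left]
  refine ⟨fun K => hmeasure ▸ hA K, ?_, lt_top_iff_ne_top.mpr fun htop => hB.2.1.ne ?_⟩
  · refine (graph_inf_eq_center hF ▸ inf_le_left).lt_of_ne fun hcenter => hB.2.2.ne ?_
    rw [← graph_sup_eq_top hF, ← hcenter, sup_eq_right.mpr hB.2.1.le]
  · rw [← graph_inf_eq_center hF, htop, top_inf_eq]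

theorem graph_ne (hB : B ∈ cdAtoms G) {F : A →* A →* center G} (hF : F ∈ h.forms) :
    h.graph F ≠ B := fun heq =>
  hB.2.1.ne <| by rw [← graph_inf_eq_center hF, heq, inf_idem]

variable (h)

theorem graph_injective : Function.Injective fun F : h.forms => h.graph F := fun F F' hFF' =>
  Subtype.ext (eq_of_graph_le F.2 F'.2 (le_of_eq hFF'))

theorem mem_iff_character_eq {K : Subgroup G} (hinf : K ⊓ B = center G)
    {g k : G} (hg : g ∈ K) (hgk : (g : G ⧸ B) = k) :
    k ∈ K ↔ h.character g = h.character k := by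
  have hB : g⁻¹ * k ∈ B := QuotientGroup.eq.mp hgk
  calc k ∈ K ↔ g⁻¹ * k ∈ K ⊓ B := by
        rw [mem_inf, and_iff_left hB, K.mul_mem_cancel_left (inv_mem hg)]
    _ ↔ g⁻¹ * k ∈ A ⊓ B := by rw [hinf, h.inf_eq_center]
    _ ↔ h.character g = h.character k := by
        rw [mem_inf, and_iff_left hB, h.character_eq_iff]

theorem exists_graph_eq {K : Subgroup G} (hinf : K ⊓ B = center G)
    (hsup : K ⊔ B = ⊤) (hsup' : centralizer (K : Set G) ⊔ B = ⊤) :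
    ∃ F ∈ h.forms, h.graph F = K := by
  have := h.normal_right
  choose k hkK hk using fun x : A => exists_mem_mk_eq_of_sup_eq_top hsup (x : G)
  have hmul (x y : A) : h.character (k (x * y)) = h.character (k x) * h.character (k y) := by
    rw [← map_mul]
    refine (h.mem_iff_character_eq hinf (hkK _) ?_).mp (mul_mem (hkK x) (hkK y))
    rw [hk, QuotientGroup.mk_mul, hk, hk, ← QuotientGroup.mk_mul, coe_mul]
  let F : A →* A →* center G := MonoidHom.mk' (fun x => h.character (k x)) hmul
  have hflip (y : A) : F.flip y ∈ h.character.range := by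
    obtain ⟨l, hl, hly⟩ := exists_mem_mk_eq_of_sup_eq_top hsup' (y : G)
    refine ⟨l, MonoidHom.ext fun x => ?_⟩
    have hcomm : commutatorPairing h.commutator_le_center (k x) l = 1 :=
      (commutatorPairing_eq_one_iff _).mpr (mem_centralizer_iff.mp hl _ (hkK x))
    rw [h.commutatorPairing_eq (hk x).symm hly.symm, mul_inv_eq_one] at hcomm
    exact hcomm.symm
  have hF : F ∈ h.forms := fun x => ⟨⟨k x, rfl⟩, hflip x⟩
  refine ⟨F, hF, ?_⟩
  ext g
  obtain ⟨x, hx⟩ := h.exists_mk_eq g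
  rw [mem_graph_iff hF hx, h.mem_iff_character_eq hinf (hkK x) ((hk x).trans hx)]
  rfl

theorem isPGroup_forms [Finite (G ⧸ center G)] {p : ℕ} [Fact p.Prime]
    (hG : IsPGroup p (G ⧸ center G)) : IsPGroup p h.forms := by
  obtain ⟨n, hn⟩ := IsPGroup.iff_card.mp hG
  refine fun F => ⟨n, Subtype.ext (MonoidHom.ext fun x => MonoidHom.ext fun y => ?_)⟩
  obtain ⟨g, hg⟩ := (F.2 x).1
  have hy : (y : G) ^ p ^ n ∈ center G := by
    rw [← QuotientGroup.eq_one_iff, QuotientGroup.mk_pow, ← hn, pow_card_eq_one']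
  calc F.1 x y ^ p ^ n = F.1 x (y ^ p ^ n) := (map_pow (F.1 x) y _).symm
    _ = h.character g (y ^ p ^ n) := by rw [hg]
    _ = 1 := (commutatorPairing_eq_one_iff h.commutator_le_center).mpr (mem_center_iff.mp hy g)

instance [Finite G] : Finite h.forms :=
  have : Finite (A →* center G) := DFunLike.finite _
  have : Finite (A →* A →* center G) := DFunLike.finite _
  inferInstance

/-- Transposition `F ↦ (x, y) ↦ F y x` of forms. -/
def flipForms : h.forms →* h.forms :=
  (MonoidHom.flipHom.comp h.forms.subtype).codRestrict h.forms fun F => flip_mem_forms F.2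

/-- The symmetric forms; by `graph_le_centralizer_iff` they are the forms with abelian graph. -/
def symmetricForms : Subgroup h.forms :=
  h.flipForms.eqLocus (MonoidHom.id h.forms)

theorem card_symmetricForms_modEq [Finite G] :
    Nat.card h.symmetricForms ≡ Nat.card h.forms [MOD 2] :=
  card_fixed_modEq_card (f := h.flipForms) fun _ => rfl

end IsPolarization

namespace IsQACD

variable {G : Type*} [Group G] [Finite G] {w : ℕ} {A B : Subgroup G}

theorem isPolarization (hG : IsQACD G w) (hA : A ∈ abelianAtoms G) (hB : B ∈ abelianAtoms G)
    (hAB : A ≠ B) : IsPolarization A B := by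
  rw [abelianAtoms_eq_inter] at hA hB
  have := hG.normal_of_mem_cdAtoms hA.1
  have := hG.normal_of_mem_cdAtoms hB.1
  exact .of_normal (hG.centralizer_eq_self hA.1 hA.2) (hG.centralizer_eq_self hB.1 hB.2)
    (hG.sup_eq_top hA.1 hB.1 hAB)

theorem cdAtoms_eq (hG : IsQACD G w) (h : IsPolarization A B) (hA : inCD A)
    (hB : B ∈ cdAtoms G) :
    cdAtoms G = insert B (Set.range fun F : h.forms => h.graph F) := by
  refine Set.Subset.antisymm (fun K hK => or_iff_not_imp_left.mpr fun hne => ?_)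
    (Set.insert_subset hB (Set.range_subset_iff.mpr fun F => h.graph_mem_cdAtoms hA hB F.2))
  have hne' : centralizer (K : Set G) ≠ B := fun heq =>
    hne (by rw [← hK.1.centralizer_centralizer, heq, h.centralizer_right])
  obtain ⟨F, hF, hFK⟩ := h.exists_graph_eq (hG.inf_eq_center hK hB hne)
    (hG.sup_eq_top hK hB hne) (hG.sup_eq_top (centralizer_mem_cdAtoms hK) hB hne')
  exact ⟨⟨F, hF⟩, hFK⟩

theorem abelianAtoms_eq (hG : IsQACD G w) (h : IsPolarization A B) (hA : inCD A)
    (hB : B ∈ cdAtoms G) :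
    abelianAtoms G = insert B ((fun F : h.forms => h.graph F) '' h.symmetricForms) := by
  have hpreimage : (fun F : h.forms => h.graph F) ⁻¹' {K | K ≤ centralizer (K : Set G)} =
      h.symmetricForms := by
    ext F
    exact (IsPolarization.graph_le_centralizer_iff F.2).trans
      (Subtype.ext_iff (a1 := h.flipForms F)).symm
  rw [abelianAtoms_eq_inter, hG.cdAtoms_eq h hA hB, Set.insert_inter_of_mem h.centralizer_right.ge,
    ← Set.image_preimage_eq_range_inter, hpreimage]

theorem width_eq_card_forms_add_one (hG : IsQACD G w) (h : IsPolarization A B) (hA : inCD A)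
    (hB : B ∈ cdAtoms G) :
    w = Nat.card h.forms + 1 := by
  rw [← hG.ncard_cdAtoms, hG.cdAtoms_eq h hA hB, Set.ncard_insert_of_notMem, ← Set.image_univ,
    Set.ncard_image_of_injective _ h.graph_injective, Set.ncard_univ]
  rintro ⟨F, hF⟩
  exact IsPolarization.graph_ne hB F.2 hF

theorem ncard_abelianAtoms_eq (hG : IsQACD G w) (h : IsPolarization A B) (hA : inCD A)
    (hB : B ∈ cdAtoms G) :
    (abelianAtoms G).ncard = Nat.card h.symmetricForms + 1 := by
  rw [hG.abelianAtoms_eq h hA hB, Set.ncard_insert_of_notMem,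
    Set.ncard_image_of_injective _ h.graph_injective]
  · rfl
  rintro ⟨F, -, hF⟩
  exact IsPolarization.graph_ne hB F.2 hF

end IsQACD

theorem stmt12_general {G : Type*} [Group G] [Finite G] {p : ℕ} (hp : p.Prime)
    (hG : IsPGroup p (G ⧸ center G)) {w : ℕ} (hQA : IsQACD G w) {t : ℕ}
    (ht : t = (abelianAtoms G).ncard) {s : ℕ} (hs : s = w - t) (ht2 : 2 ≤ t) (hs1 : 1 ≤ s) :
    (p = 2 → 3 ≤ t) ∧ (p - 1) * (t - 1) ≤ s := by
  have := Fact.mk hp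
  obtain ⟨A, hA, B, hB, hAB⟩ := (Set.one_lt_ncard (Set.toFinite _)).mp (ht ▸ ht2)
  have h : IsPolarization A B := hQA.isPolarization hA hB hAB
  rw [abelianAtoms_eq_inter] at hA hB
  have hw : w = Nat.card h.forms + 1 := hQA.width_eq_card_forms_add_one h hA.1.1 hB.1
  rw [hQA.ncard_abelianAtoms_eq h hA.1.1 hB.1] at ht
  have hpos : 0 < Nat.card h.symmetricForms := Nat.card_pos
  have hpGroup : IsPGroup p h.forms := h.isPGroup_forms hG
  have hle : p * Nat.card h.symmetricForms ≤ Nat.card h.forms :=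
    mul_card_le_card_of_isPGroup_of_ne_top hpGroup fun htop => by rw [htop, card_top] at ht; omega
  refine ⟨?_, ?_⟩
  · rintro rfl
    have hmod : Nat.card h.symmetricForms % 2 = Nat.card h.forms % 2 := h.card_symmetricForms_modEq
    have heven : Nat.card h.forms = 1 ∨ 2 ∣ Nat.card h.forms := hpGroup.card_eq_or_dvd
    omega
  · rw [hs, hw, ht, Nat.sub_one_mul, Nat.add_sub_cancel, Nat.add_sub_add_right]
    exact Nat.sub_le_sub_right hle _

/-- for a finite `p`-group `G` with `CD(G)` a quasi-antichain of
width `w ≥ 3`, `G ∈ CD(G)`, and `|G/Z(G)| = p^(2a)`, with `t` the number of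
abelian atoms and `s = w - t` the number of nonabelian atoms: if `t ≥ 2` and
`s ≥ 2`, then `3 ≤ t` and `t ≤ s + 1` when `p = 2`, and `2·(t-1) ≤ s` when `p`
is odd. -/
theorem stmt12 {G : Type*} [Group G] [Finite G] (p : ℕ) (hp : p.Prime)
    (hpG : IsPGroup p G) (w : ℕ) (hw : 3 ≤ w) (hQA : IsQACD G w)
    (a : ℕ) (ha : 0 < a)
    (hcard : Nat.card (G ⧸ Subgroup.center G) = p ^ (2 * a))
    (t : ℕ) (ht : t = (abelianAtoms G).ncard)
    (s : ℕ) (hs : s = w - t) :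
    2 ≤ t → 2 ≤ s →
      (p = 2 → 3 ≤ t ∧ t ≤ s + 1) ∧ (Odd p → 2 * (t - 1) ≤ s) := by
  intro ht2 hs2
  obtain ⟨h3, hle⟩ := stmt12_general hp (hpG.to_quotient _) hQA ht hs ht2 (by omega)
  refine ⟨fun hp2 => ⟨h3 hp2, by subst hp2; omega⟩, fun hodd => hle.trans' ?_⟩
  have hlt : 2 < p := hp.two_le.lt_of_ne' (hodd.ne_two_of_dvd_nat dvd_rfl)
  exact Nat.mul_le_mul_right _ (Nat.le_sub_one_of_lt hlt)
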